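/- Fix integers 0 ≤ q < d. Let P be a stationary and ergodic probability measure on Ω = [0,1]^{K^d} such that the marginal distribution function F^Q(t) = P(ω_Q ≤ t) is continuous in t ∈ [0,1] for every Q ∈ K^d. Then the sequence of functions t ↦ |Λ_n|^{−1} E[β_q^n(t)] converges uniformly on [0,1] to β̂_q(t) as n → ∞, where β̂_q(t) := limsup_{n→∞} |Λ_n|^{−1} E[β_q^n(t)]. -/

import Mathlib

open MeasureTheory Filter Topology

noncomputable section

/-- An elementary cube in `ℝ^d`: the `i`-th component is the elementary interval
`[l, l+1]` if the Boolean is `true` (nondegenerate) and `[l, l]` if `false` (degenerate). -/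
abbrev ElemCube (d : ℕ) := Fin d → ℤ × Bool

/-- The dimension of an elementary cube: the number of nondegenerate components. -/
def cubeDim {d : ℕ} (Q : ElemCube d) : ℕ :=
  (Finset.univ.filter fun i => (Q i).2 = true).card

/-- The geometric realization of an elementary cube as a subset of `ℝ^d`. -/
def cubeSet {d : ℕ} (Q : ElemCube d) : Set (Fin d → ℝ) :=
  {x | ∀ i, x i ∈ Set.Icc ((Q i).1 : ℝ) ((Q i).1 + (if (Q i).2 then 1 else 0))}

/-- A cubical set is a union of elementary cubes. -/
def IsCubical {d : ℕ} (X : Set (Fin d → ℝ)) : Prop :=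
  ∃ S : Set (ElemCube d), X = ⋃ Q ∈ S, cubeSet Q

/-- The free `ℤ`-module generated by all elementary cubes of `ℝ^d` (all dimensions mixed). -/
abbrev CubChain (d : ℕ) := ElemCube d →₀ ℤ

/-- The cubical boundary of a single elementary cube, defined by induction on the ambient
dimension, following the inductive definition: in `ℝ¹`, `∂ [l,l+1]^ = [l+1]^ - [l]^` and
`∂ Q̂ = 0` for degenerate `Q`; and for `Q = I × P`,
`∂ Q̂ = (∂ Î) ⋄ P̂ + (-1)^(dim I) Î ⋄ (∂ P̂)`, where `⋄` is the cubical product. -/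
def boundaryCube : (d : ℕ) → ElemCube d → CubChain d
  | 0, _ => 0
  | d + 1, Q =>
      (if (Q 0).2 then
          Finsupp.single (Fin.cons ((Q 0).1 + 1, false) (fun i => Q i.succ)) (1 : ℤ)
            - Finsupp.single (Fin.cons ((Q 0).1, false) (fun i => Q i.succ)) (1 : ℤ)
        else 0)
      + (if (Q 0).2 then (-1 : ℤ) else 1) •
          (boundaryCube d (fun i => Q i.succ)).sum
            (fun R n => Finsupp.single (Fin.cons (Q 0) R) n)

/-- The cubical boundary operator, the `ℤ`-linear extension of `boundaryCube`. -/
def boundaryHom (d : ℕ) : CubChain d →ₗ[ℤ] CubChain d :=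
  Finsupp.lsum ℤ fun Q => LinearMap.toSpanSingleton ℤ (CubChain d) (boundaryCube d Q)

/-- `C_k^d(X)`: the submodule of chains supported on the `k`-dimensional elementary cubes
contained in `X`. -/
def chainsOn (d k : ℕ) (X : Set (Fin d → ℝ)) : Submodule ℤ (CubChain d) :=
  Finsupp.supported ℤ ℤ {Q : ElemCube d | cubeDim Q = k ∧ cubeSet Q ⊆ X}

/-- `Z_q(X) = ker ∂_q^X`, the cycles of the cubical set `X` in degree `q`. -/
def cycleMod (d q : ℕ) (X : Set (Fin d → ℝ)) : Submodule ℤ (CubChain d) :=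
  chainsOn d q X ⊓ LinearMap.ker (boundaryHom d)

/-- `B_q(X) = im ∂_{q+1}^X`, the boundaries of the cubical set `X` in degree `q`. -/
def boundaryMod (d q : ℕ) (X : Set (Fin d → ℝ)) : Submodule ℤ (CubChain d) :=
  Submodule.map (boundaryHom d) (chainsOn d (q + 1) X)

/-- The `q`-th Betti number of a cubical set: the rank of the free part of the `q`-th
cubical homology `H_q(X) = Z_q(X) / B_q(X)`. -/
def betti (d q : ℕ) (X : Set (Fin d → ℝ)) : ℕ :=
  Module.finrank ℤ
    (↥(cycleMod d q X) ⧸ (boundaryMod d q X).comap (cycleMod d q X).subtype)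

/-- `Λ_n = [-n, n]^d ⊆ ℝ^d`. -/
def lambda (d n : ℕ) : Set (Fin d → ℝ) := {x | ∀ i, x i ∈ Set.Icc (-(n : ℝ)) n}

/-- The configuration space `Ω = [0,1]^{K^d}` with the product σ-field. -/
abbrev Config (d : ℕ) := ElemCube d → unitInterval

/-- Translation of an elementary cube by `x ∈ ℤ^d`. -/
def translateCube {d : ℕ} (x : Fin d → ℤ) (Q : ElemCube d) : ElemCube d :=
  fun i => ((Q i).1 + x i, (Q i).2)

/-- The translation action `τ_x` on configurations: `(τ_x ω)_Q = ω_{-x+Q}`. -/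
def configShift {d : ℕ} (x : Fin d → ℤ) (ω : Config d) : Config d :=
  fun Q => ω (translateCube (-x) Q)

/-- Stationarity of a measure on configuration space: `P(τ_x⁻¹ A) = P(A)`. -/
def Stationary {d : ℕ} (P : Measure (Config d)) : Prop :=
  ∀ (x : Fin d → ℤ) (A : Set (Config d)), MeasurableSet A → P (configShift x ⁻¹' A) = P A

/-- Ergodicity of a measure on configuration space under translations. -/
def ErgodicConfig {d : ℕ} (P : Measure (Config d)) : Prop :=
  ∀ A : Set (Config d), MeasurableSet A →
    (∀ x : Fin d → ℤ, configShift x ⁻¹' A = A) → P A = 0 ∨ P A = 1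

/-- The random cubical set `X(t) = ⋃ {Q ∈ K^d : ω_Q ≤ t}`. -/
def cubSet {d : ℕ} (ω : Config d) (t : ℝ) : Set (Fin d → ℝ) :=
  ⋃ Q ∈ {Q : ElemCube d | (ω Q : ℝ) ≤ t}, cubeSet Q

/-- `β_q^n(t)(ω) = β_q(X(t) ∩ Λ_n)`. -/
def bettiN (d q n : ℕ) (t : ℝ) (ω : Config d) : ℕ :=
  betti d q (cubSet ω t ∩ lambda d n)

/-- `β̂_q(t) := limsup_{n → ∞} |Λ_n|⁻¹ E[β_q^n(t)]`, where `|Λ_n| = (2n)^d`. -/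
def betaHat (d q : ℕ) (P : Measure (Config d)) (t : ℝ) : ℝ :=
  limsup (fun n : ℕ => ((2 * (n : ℝ)) ^ d)⁻¹ * ∫ ω, (bettiN d q n t ω : ℝ) ∂P) atTop

section LinAlg

set_option linter.unusedSectionVars false

variable {ι : Type}

section Gen

variable {R : Type} [CommRing R] [IsDomain R] [IsNoetherianRing R]

lemma finite_supported {S : Set ι} (h : S.Finite) : Module.Finite R (Finsupp.supported R R S) := by
  have := h.to_subtype
  exact Module.Finite.equiv (Finsupp.supportedEquivFinsupp S).symm

lemma finite_of_le {M : Type} [AddCommGroup M] [Module R M] {A B : Submodule R M}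
    (h : A ≤ B) [Module.Finite R B] : Module.Finite R A :=
  Module.Finite.of_injective (Submodule.inclusion h) (Submodule.inclusion_injective h)

lemma rank_null {M N : Type} [AddCommGroup M] [Module R M] [AddCommGroup N] [Module R N]
    [Module.Finite R M] (f : M →ₗ[R] N) :
    Module.finrank R (LinearMap.range f) + Module.finrank R (LinearMap.ker f)
      = Module.finrank R M := by
  rw [← f.quotKerEquivRange.finrank_eq]
  exact Submodule.finrank_quotient_add_finrank _

/-- cutting down by a coordinate condition -/
lemma finrank_cut {M : Type} [AddCommGroup M] [Module R M] (f : M →ₗ[R] (ι →₀ R))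
    (A : Submodule R M) [Module.Finite R A] (S T : Set ι) (F : Finset ι)
    (hF : ∀ x ∈ T, x ∉ S → x ∈ F)
    (hA : A ≤ (Finsupp.supported R R T).comap f) :
    Module.finrank R A ≤
      Module.finrank R (A ⊓ (Finsupp.supported R R S).comap f : Submodule R M) + F.card := by
  classical
  let g : A →ₗ[R] ({x : F // (x : ι) ∉ S} → R) :=
    LinearMap.pi fun x => (Finsupp.lapply (x : ι)) ∘ₗ f ∘ₗ A.subtype
  have h1 := rank_null g
  have h2 : Module.finrank R (LinearMap.range g) ≤ F.card := by
    refine (Submodule.finrank_le _).trans ?_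
    rw [Module.finrank_fintype_fun_eq_card]
    refine (Fintype.card_subtype_le _).trans ?_
    simp
  have h3 : Module.finrank R (LinearMap.ker g) ≤
      Module.finrank R (A ⊓ (Finsupp.supported R R S).comap f : Submodule R M) := by
    have hfin : Module.Finite R (A ⊓ (Finsupp.supported R R S).comap f : Submodule R M) :=
      finite_of_le inf_le_left
    let k : LinearMap.ker g →ₗ[R] (A ⊓ (Finsupp.supported R R S).comap f : Submodule R M) :=
      LinearMap.codRestrict _ (A.subtype ∘ₗ (LinearMap.ker g).subtype) (by
        rintro ⟨⟨a, ha⟩, hk⟩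
        refine ⟨ha, ?_⟩
        simp only [LinearMap.comp_apply, Submodule.subtype_apply, SetLike.mem_coe,
          Submodule.mem_comap]
        rw [Finsupp.mem_supported']
        intro x hx
        by_cases hT : x ∈ T
        · have := congrFun (LinearMap.mem_ker.1 hk) ⟨⟨x, hF x hT hx⟩, hx⟩
          simpa [g] using this
        · have := hA ha
          rw [Submodule.mem_comap, Finsupp.mem_supported'] at this
          exact this x hT)
    refine LinearMap.finrank_le_finrank_of_injective (f := k) ?_
    intro a b hab
    have := congrArg Subtype.val hab
    exact Subtype.ext (Subtype.ext this)
  omega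

lemma finrank_map_le {M N : Type} [AddCommGroup M] [Module R M] [AddCommGroup N] [Module R N]
    (f : M →ₗ[R] N) (A : Submodule R M) [Module.Finite R A] :
    Module.finrank R (A.map f) + Module.finrank R (A ⊓ LinearMap.ker f : Submodule R M)
      = Module.finrank R A := by
  rw [← rank_null (f.domRestrict A)]
  congr 1
  · rw [LinearMap.range_domRestrict]
  · rw [LinearMap.ker_domRestrict]
    have e := Submodule.equivMapOfInjective A.subtype A.subtype_injective
      ((LinearMap.ker f).submoduleOf A)
    unfold Submodule.submoduleOf at e
    rw [e.finrank_eq, Submodule.map_comap_subtype]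

lemma finrank_sup_disj {M : Type} [AddCommGroup M] [Module R M] (A B : Submodule R M)
    [Module.Finite R A] [Module.Finite R B] (h : Disjoint A B) :
    Module.finrank R (A ⊔ B : Submodule R M) = Module.finrank R A + Module.finrank R B := by
  have := Submodule.rank_sup_add_rank_inf_eq (R := R) A B
  rw [h.eq_bot, rank_bot, add_zero] at this
  have fs : Module.Finite R (A ⊔ B : Submodule R M) := by
    have h1 : A.FG := Module.Finite.iff_fg.1 inferInstance
    have h2 : B.FG := Module.Finite.iff_fg.1 inferInstance
    exact Module.Finite.iff_fg.2 (h1.sup h2)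
  rw [← Module.finrank_eq_rank, ← Module.finrank_eq_rank, ← Module.finrank_eq_rank] at this
  exact_mod_cast this

end Gen

variable (D : (ι →₀ ℤ) →ₗ[ℤ] (ι →₀ ℤ))

/-- cycles -/
def zM (U : Set ι) : Submodule ℤ (ι →₀ ℤ) := Finsupp.supported ℤ ℤ U ⊓ LinearMap.ker D

/-- chains of one dimension higher with boundary a cycle -/
def yM (U V : Set ι) : Submodule ℤ (ι →₀ ℤ) := Finsupp.supported ℤ ℤ V ⊓ (zM D U).comap D

def bb (U V : Set ι) : ℕ :=
  Module.finrank ℤ (↥(zM D U) ⧸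
    ((Finsupp.supported ℤ ℤ V).map D).comap (zM D U).subtype)

lemma map_yM (U V : Set ι) : (yM D U V).map D = zM D U ⊓ (Finsupp.supported ℤ ℤ V).map D := by
  ext x
  simp only [yM, Submodule.mem_map, Submodule.mem_inf, Submodule.mem_comap]
  constructor
  · rintro ⟨y, ⟨h1, h2⟩, rfl⟩
    exact ⟨h2, y, h1, rfl⟩
  · rintro ⟨h2, y, h1, rfl⟩
    exact ⟨y, ⟨h1, h2⟩, rfl⟩

lemma finite_zM {U : Set ι} (hU : U.Finite) : Module.Finite ℤ (zM D U) := by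
  have := finite_supported (R := ℤ) hU
  exact finite_of_le (inf_le_left : zM D U ≤ _)

lemma finite_yM (U : Set ι) {V : Set ι} (hV : V.Finite) : Module.Finite ℤ (yM D U V) := by
  have := finite_supported (R := ℤ) hV
  exact finite_of_le (inf_le_left : yM D U V ≤ _)

lemma bb_add (U V : Set ι) (hU : U.Finite) :
    bb D U V + Module.finrank ℤ ((yM D U V).map D) = Module.finrank ℤ (zM D U) := by
  have := finite_zM D hU
  rw [← Submodule.finrank_quotient_add_finrank
    (((Finsupp.supported ℤ ℤ V).map D).comap (zM D U).subtype)]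
  unfold bb
  congr 1
  have e := Submodule.equivMapOfInjective (zM D U).subtype (zM D U).subtype_injective
      (((Finsupp.supported ℤ ℤ V).map D).comap (zM D U).subtype)
  rw [e.finrank_eq, Submodule.map_comap_subtype, map_yM]

lemma bb_lip {U V U' V' : Set ι} (hU' : U'.Finite) (hV' : V'.Finite) (hU : U ⊆ U') (hV : V ⊆ V')
    (F : Finset ι) (hFU : ∀ x ∈ U', x ∉ U → x ∈ F) (hFV : ∀ x ∈ V', x ∉ V → x ∈ F) :
    |(bb D U' V' : ℤ) - bb D U V| ≤ 2 * F.card := by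
  have e1 := bb_add D U V (hU'.subset hU)
  have e2 := bb_add D U' V' hU'
  have := finite_zM D hU'
  have := finite_yM D U' hV'
  have := finite_yM D U (hV'.subset hV)
  have zle : zM D U ≤ zM D U' := inf_le_inf_right _ (Finsupp.supported_mono hU)
  have yle : yM D U V ≤ yM D U' V' :=
    inf_le_inf (Finsupp.supported_mono hV) (Submodule.comap_mono zle)
  have z1 := Submodule.finrank_mono zle
  have z2 : Module.finrank ℤ (zM D U') ≤ Module.finrank ℤ (zM D U) + F.card := by
    have := finrank_cut LinearMap.id (zM D U') U U' F hFU inf_le_left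
    refine this.trans (Nat.add_le_add_right ?_ _)
    have := finite_zM D (hU'.subset hU)
    refine Submodule.finrank_mono ?_
    rintro x ⟨⟨_, h1⟩, h2⟩
    exact ⟨h2, h1⟩
  have w1 : Module.finrank ℤ ((yM D U V).map D) ≤ Module.finrank ℤ ((yM D U' V').map D) :=
    Submodule.finrank_mono (Submodule.map_mono yle)
  have y2 : Module.finrank ℤ (yM D U' V') ≤ Module.finrank ℤ (yM D U V) + 2 * F.card := by
    have h1 := finrank_cut LinearMap.id (yM D U' V') V V' F hFV inf_le_left
    have : Module.Finite ℤ (yM D U' V' ⊓ (Finsupp.supported ℤ ℤ V).comap LinearMap.id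
      : Submodule ℤ (ι →₀ ℤ)) := finite_of_le inf_le_left
    have h2 := finrank_cut D (yM D U' V' ⊓ (Finsupp.supported ℤ ℤ V).comap LinearMap.id) U U' F hFU
      (by rintro x ⟨⟨_, h1⟩, h2⟩
          exact h1.1)
    have h3 : Module.finrank ℤ ((yM D U' V' ⊓ (Finsupp.supported ℤ ℤ V).comap LinearMap.id) ⊓
       (Finsupp.supported ℤ ℤ U).comap D : Submodule ℤ (ι →₀ ℤ)) ≤
         Module.finrank ℤ (yM D U V) := by
      refine Submodule.finrank_mono ?_
      rintro x ⟨⟨⟨_, h1⟩, h2⟩, h3⟩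
      exact ⟨h2, h3, h1.2⟩
    omega
  have m1 := finrank_map_le D (yM D U V)
  have m2 := finrank_map_le D (yM D U' V')
  have m3 : Module.finrank ℤ (yM D U V ⊓ LinearMap.ker D : Submodule ℤ (ι →₀ ℤ)) ≤
      Module.finrank ℤ (yM D U' V' ⊓ LinearMap.ker D : Submodule ℤ (ι →₀ ℤ)) := by
    have : Module.Finite ℤ (yM D U' V' ⊓ LinearMap.ker D : Submodule ℤ (ι →₀ ℤ)) :=
      finite_of_le inf_le_left
    exact Submodule.finrank_mono (inf_le_inf_right _ yle)
  rw [abs_le]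
  constructor <;> omega

lemma bb_empty : bb D ∅ ∅ = 0 := by
  have := bb_add D ∅ ∅ Set.finite_empty
  have h : zM D (∅ : Set ι) = ⊥ := by simp [zM]
  rw [h, finrank_bot] at this
  omega

/-- additivity -/
lemma bb_union {U V U' V' K K' : Set ι} (hU : U.Finite) (hV : V.Finite)
    (hU' : U'.Finite) (hV' : V'.Finite) (hK : Disjoint K K')
    (hUK : U ⊆ K) (hVK : V ⊆ K) (hUK' : U' ⊆ K') (hVK' : V' ⊆ K')
    (hD : ∀ c ∈ Finsupp.supported ℤ ℤ K, D c ∈ Finsupp.supported ℤ ℤ K)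
    (hD' : ∀ c ∈ Finsupp.supported ℤ ℤ K', D c ∈ Finsupp.supported ℤ ℤ K') :
    bb D (U ∪ U') (V ∪ V') = bb D U V + bb D U' V' := by
  have e1 := bb_add D U V hU
  have e2 := bb_add D U' V' hU'
  have e3 := bb_add D (U ∪ U') (V ∪ V') (hU.union hU')
  have := finite_zM D hU
  have := finite_zM D hU'
  have := finite_yM D U hV
  have := finite_yM D U' hV'
  have dis : Disjoint (Finsupp.supported ℤ ℤ K) (Finsupp.supported ℤ ℤ K') :=
    Finsupp.disjoint_supported_supported hK
  have zer : ∀ a ∈ Finsupp.supported ℤ ℤ K, ∀ b ∈ Finsupp.supported ℤ ℤ K', a + b = 0 →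
      a = 0 ∧ b = 0 := by
    intro a ha b hb hab
    have h1 : a = -b := eq_neg_of_add_eq_zero_left hab
    have h2 : a = 0 := by
      refine (Submodule.disjoint_def.1 dis) a ha ?_
      rw [h1]
      exact Submodule.neg_mem _ hb
    refine ⟨h2, ?_⟩
    rw [h2, zero_add] at hab
    exact hab
  have zK : zM D U ≤ Finsupp.supported ℤ ℤ K := inf_le_left.trans (Finsupp.supported_mono hUK)
  have zK' : zM D U' ≤ Finsupp.supported ℤ ℤ K' :=
    inf_le_left.trans (Finsupp.supported_mono hUK')
  have zU : zM D (U ∪ U') = zM D U ⊔ zM D U' := by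
    apply le_antisymm
    · rintro x ⟨h1, h2⟩
      rw [SetLike.mem_coe, Finsupp.supported_union] at h1
      obtain ⟨a, ha, b, hb, rfl⟩ := Submodule.mem_sup.1 h1
      rw [SetLike.mem_coe, LinearMap.mem_ker, map_add] at h2
      obtain ⟨h3, h4⟩ := zer _ (hD _ (Finsupp.supported_mono hUK ha)) _
        (hD' _ (Finsupp.supported_mono hUK' hb)) h2
      exact Submodule.mem_sup.2 ⟨a, ⟨ha, h3⟩, b, ⟨hb, h4⟩, rfl⟩
    · exact sup_le (inf_le_inf_right _ (Finsupp.supported_mono Set.subset_union_left))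
        (inf_le_inf_right _ (Finsupp.supported_mono Set.subset_union_right))
  have yU : (yM D (U ∪ U') (V ∪ V')).map D = (yM D U V).map D ⊔ (yM D U' V').map D := by
    rw [map_yM, map_yM, map_yM]
    apply le_antisymm
    · rintro x ⟨h1, y, hy, rfl⟩
      rw [SetLike.mem_coe, Finsupp.supported_union] at hy
      obtain ⟨a, ha, b, hb, rfl⟩ := Submodule.mem_sup.1 hy
      rw [zU, SetLike.mem_coe] at h1
      obtain ⟨u, hu, v, hv, huv⟩ := Submodule.mem_sup.1 h1
      rw [map_add] at huv ⊢
      have ka := hD _ (Finsupp.supported_mono hVK ha)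
      have kb := hD' _ (Finsupp.supported_mono hVK' hb)
      obtain ⟨h3, h4⟩ := zer (D a - u) (Submodule.sub_mem _ ka (zK hu)) (D b - v)
        (Submodule.sub_mem _ kb (zK' hv)) (by rw [sub_add_sub_comm, huv, sub_self])
      rw [sub_eq_zero] at h3 h4
      refine Submodule.mem_sup.2 ⟨D a, ⟨?_, a, ha, rfl⟩, D b, ⟨?_, b, hb, rfl⟩, rfl⟩
      · rw [h3]; exact hu
      · rw [h4]; exact hv
    · rw [zU]
      exact sup_le
        (inf_le_inf le_sup_left
          (Submodule.map_mono (Finsupp.supported_mono Set.subset_union_left)))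
        (inf_le_inf le_sup_right
          (Submodule.map_mono (Finsupp.supported_mono Set.subset_union_right)))
  have f1 := finrank_sup_disj (zM D U) (zM D U') (dis.mono zK zK')
  have f2 := finrank_sup_disj ((yM D U V).map D) ((yM D U' V').map D)
    (dis.mono (by rw [map_yM]; exact inf_le_left.trans zK)
      (by rw [map_yM]; exact inf_le_left.trans zK'))
  rw [zU, f1, yU, f2] at e3
  omega

/-- equivariance -/
lemma bb_equiv (σ : ι ≃ ι) (hσ : ∀ c, D (Finsupp.domLCongr (R := ℤ) (M := ℤ) σ c) =
      Finsupp.domLCongr (R := ℤ) (M := ℤ) σ (D c)) (U V : Set ι) (hU : U.Finite) :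
    bb D (σ '' U) (σ '' V) = bb D U V := by
  have e1 := bb_add D U V hU
  have e2 := bb_add D (σ '' U) (σ '' V) (hU.image σ)
  set s := Finsupp.domLCongr (R := ℤ) (M := ℤ) σ with hs
  have sup : ∀ A : Set ι, ∀ c, s c ∈ Finsupp.supported ℤ ℤ (σ '' A) ↔
      c ∈ Finsupp.supported ℤ ℤ A := by
    intro A c
    rw [Finsupp.mem_supported', Finsupp.mem_supported']
    constructor
    · intro h x hx
      have := h (σ x) (by simpa using hx)
      simpa [hs] using this
    · intro h x hx
      have := h (σ.symm x) (by
        intro h'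
        exact hx ⟨_, h', by simp⟩)
      simpa [hs] using this
  have z : zM D (σ '' U) = (zM D U).map (s : (ι →₀ ℤ) →ₗ[ℤ] (ι →₀ ℤ)) := by
    ext x
    obtain ⟨c, rfl⟩ := s.surjective x
    have : s c ∈ (zM D U).map (s : (ι →₀ ℤ) →ₗ[ℤ] (ι →₀ ℤ)) ↔ c ∈ zM D U := by
      simp
    rw [this]
    simp only [zM, Submodule.mem_inf, LinearMap.mem_ker, sup, hσ]
    simp
  have y : (yM D (σ '' U) (σ '' V)).map D =
      ((yM D U V).map D).map (s : (ι →₀ ℤ) →ₗ[ℤ] (ι →₀ ℤ)) := by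
    have : yM D (σ '' U) (σ '' V) = (yM D U V).map (s : (ι →₀ ℤ) →ₗ[ℤ] (ι →₀ ℤ)) := by
      ext x
      obtain ⟨c, rfl⟩ := s.surjective x
      have : s c ∈ (yM D U V).map (s : (ι →₀ ℤ) →ₗ[ℤ] (ι →₀ ℤ)) ↔ c ∈ yM D U V := by
        simp
      rw [this]
      simp only [yM, Submodule.mem_inf, Submodule.mem_comap, sup, hσ, z]
      simp
    rw [this, ← Submodule.map_comp, ← Submodule.map_comp]
    congr 1
    refine LinearMap.ext fun c => ?_
    simp only [LinearMap.comp_apply]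
    exact hσ _
  rw [z, y, LinearEquiv.finrank_map_eq, LinearEquiv.finrank_map_eq] at e2
  omega

end LinAlg

section Geom

def blen (b : Bool) : ℤ := if b then 1 else 0

lemma blen_cases (b : Bool) : (b = true ∧ blen b = 1) ∨ (b = false ∧ blen b = 0) := by
  cases b <;> simp [blen]

def faceLE {d : ℕ} (R Q : ElemCube d) : Prop :=
  ∀ i, (Q i).1 ≤ (R i).1 ∧ (R i).1 + blen (R i).2 ≤ (Q i).1 + blen (Q i).2

lemma boundaryCube_supp : ∀ (d : ℕ) (Q : ElemCube d),
    boundaryCube d Q ∈ Finsupp.supported ℤ ℤ {R | faceLE R Q}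
  | 0, _ => by simp [boundaryCube]
  | d + 1, Q => by
    have ih := boundaryCube_supp d (fun i => Q i.succ)
    unfold boundaryCube
    refine Submodule.add_mem _ ?_ (Submodule.smul_mem _ _ (Submodule.sum_mem _ ?_))
    · split_ifs with h
      · refine Submodule.sub_mem _ (Finsupp.single_mem_supported _ _ ?_)
          (Finsupp.single_mem_supported _ _ ?_)
        · intro i
          refine Fin.cases ?_ (fun j => ?_) i
          · simp [blen, h]
          · simp
        · intro i
          refine Fin.cases ?_ (fun j => ?_) i
          · simp [blen, h]
          · simp
      · exact Submodule.zero_mem _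
    · intro R hR
      refine Finsupp.single_mem_supported _ _ ?_
      have h := ih hR
      intro i
      refine Fin.cases ?_ (fun j => ?_) i
      · simp
      · simpa using h j

lemma translate_cons {d : ℕ} (x : Fin (d + 1) → ℤ) (a : ℤ × Bool) (R : ElemCube d) :
    translateCube x (Fin.cons a R : ElemCube (d + 1)) =
      (Fin.cons (a.1 + x 0, a.2) (translateCube (fun i => x i.succ) R) : ElemCube (d + 1)) := by
  funext i
  refine Fin.cases ?_ (fun j => ?_) i <;> simp [translateCube]

lemma boundaryCube_translate : ∀ (d : ℕ) (x : Fin d → ℤ) (Q : ElemCube d),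
    boundaryCube d (translateCube x Q) = Finsupp.mapDomain (translateCube x) (boundaryCube d Q)
  | 0, _, _ => by simp [boundaryCube]
  | d + 1, x, Q => by
    have ih := boundaryCube_translate d (fun i => x i.succ) (fun i => Q i.succ)
    have e : (fun i : Fin d => translateCube x Q i.succ) =
      translateCube (fun i => x i.succ) (fun i => Q i.succ) := rfl
    have hs : ∀ (a : ℤ × Bool) (v : CubChain d),
        v.sum (fun R n => Finsupp.single (Fin.cons a R : ElemCube (d + 1)) n) =
        Finsupp.mapDomain (fun R => (Fin.cons a R : ElemCube (d + 1))) v := fun _ _ => rfl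
    have hneg : ∀ u v : CubChain (d + 1), Finsupp.mapDomain (translateCube x) (u - v) =
        Finsupp.mapDomain (translateCube x) u - Finsupp.mapDomain (translateCube x) v :=
      fun u v => (Finsupp.mapDomain.addMonoidHom (translateCube x)).map_sub u v
    have hcomp : ∀ v : CubChain d, Finsupp.mapDomain (translateCube x)
        (Finsupp.mapDomain (fun R => (Fin.cons (Q 0) R : ElemCube (d + 1))) v) =
        Finsupp.mapDomain (fun R => (Fin.cons (translateCube x Q 0) R : ElemCube (d + 1)))
          (Finsupp.mapDomain (translateCube fun i => x i.succ) v) := by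
      intro v
      rw [← Finsupp.mapDomain_comp, ← Finsupp.mapDomain_comp]
      congr 1
      funext R
      exact translate_cons x _ R
    have e2 : (translateCube x Q 0).2 = (Q 0).2 := rfl
    have e1 : (translateCube x Q 0).1 = (Q 0).1 + x 0 := rfl
    simp only [boundaryCube]
    rw [e, ih, hs, hs, Finsupp.mapDomain_add, Finsupp.mapDomain_smul, hcomp, e2]
    congr 1
    split_ifs
    · rw [hneg, Finsupp.mapDomain_single, Finsupp.mapDomain_single, translate_cons,
        translate_cons, e1, add_right_comm]
    · simp

def trEquiv {d : ℕ} (x : Fin d → ℤ) : ElemCube d ≃ ElemCube d where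
  toFun := translateCube x
  invFun := translateCube (-x)
  left_inv Q := by funext i; simp [translateCube]
  right_inv Q := by funext i; simp [translateCube]

lemma boundaryHom_apply (d : ℕ) (c : CubChain d) :
    boundaryHom d c = c.sum fun Q n => n • boundaryCube d Q := by
  rfl

lemma boundaryHom_translate {d : ℕ} (x : Fin d → ℤ) (c : CubChain d) :
    boundaryHom d (Finsupp.domLCongr (R := ℤ) (M := ℤ) (trEquiv x) c) =
      Finsupp.domLCongr (R := ℤ) (M := ℤ) (trEquiv x) (boundaryHom d c) := by
  induction c using Finsupp.induction_linear with
  | zero => simp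
  | add f g hf hg => simp only [map_add, hf, hg]
  | single Q n =>
    rw [Finsupp.domLCongr_single, boundaryHom_apply, boundaryHom_apply,
      Finsupp.sum_single_index (by simp), Finsupp.sum_single_index (by simp), map_smul,
      Finsupp.domLCongr_apply, Finsupp.domCongr_apply, Finsupp.equivMapDomain_eq_mapDomain]
    congr 1
    exact boundaryCube_translate d x Q

def FaceClosed {d : ℕ} (K : Set (ElemCube d)) : Prop := ∀ Q ∈ K, ∀ R, faceLE R Q → R ∈ K

lemma boundaryHom_supp {d : ℕ} {K : Set (ElemCube d)} (hK : FaceClosed K) (c : CubChain d)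
    (hc : c ∈ Finsupp.supported ℤ ℤ K) : boundaryHom d c ∈ Finsupp.supported ℤ ℤ K := by
  rw [boundaryHom_apply]
  refine Submodule.sum_mem _ fun Q hQ => Submodule.smul_mem _ _ ?_
  exact Finsupp.supported_mono (fun R hR => hK Q (hc hQ) R hR) (boundaryCube_supp d Q)

def bS (d q : ℕ) (S : Set (ElemCube d)) : ℕ :=
  bb (boundaryHom d) {Q | cubeDim Q = q ∧ Q ∈ S} {Q | cubeDim Q = q + 1 ∧ Q ∈ S}

lemma betti_eq (d q : ℕ) (X : Set (Fin d → ℝ)) : betti d q X = bS d q {Q | cubeSet Q ⊆ X} := rfl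

lemma fin_sub {d q : ℕ} {S : Set (ElemCube d)} (hS : S.Finite) :
    {Q | cubeDim Q = q ∧ Q ∈ S}.Finite := hS.subset fun _ h => h.2

lemma bS_lip (d q : ℕ) {S S' : Set (ElemCube d)} (h : S ⊆ S') (hS' : S'.Finite)
    (F : Finset (ElemCube d)) (hF : ∀ x ∈ S', x ∉ S → x ∈ F) :
    |(bS d q S' : ℤ) - bS d q S| ≤ 2 * F.card := by
  refine bb_lip _ (fin_sub hS') (fin_sub hS') (fun Q hQ => ⟨hQ.1, h hQ.2⟩)
    (fun Q hQ => ⟨hQ.1, h hQ.2⟩) F ?_ ?_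
  · exact fun x hx hx' => hF x hx.2 fun h' => hx' ⟨hx.1, h'⟩
  · exact fun x hx hx' => hF x hx.2 fun h' => hx' ⟨hx.1, h'⟩

lemma bS_empty (d q : ℕ) : bS d q ∅ = 0 := by
  simpa [bS] using bb_empty (boundaryHom d)

lemma cubeDim_translate {d : ℕ} (x : Fin d → ℤ) (Q : ElemCube d) :
    cubeDim (translateCube x Q) = cubeDim Q := rfl

lemma bS_translate (d q : ℕ) (x : Fin d → ℤ) {S : Set (ElemCube d)} (hS : S.Finite) :
    bS d q (trEquiv x '' S) = bS d q S := by
  have key : ∀ k, {Q | cubeDim Q = k ∧ Q ∈ trEquiv x '' S} =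
      trEquiv x '' {Q | cubeDim Q = k ∧ Q ∈ S} := by
    intro k
    ext Q
    constructor
    · rintro ⟨h, R, hR, rfl⟩
      exact ⟨R, ⟨h, hR⟩, rfl⟩
    · rintro ⟨R, ⟨h, hR⟩, rfl⟩
      exact ⟨h, R, hR, rfl⟩
  unfold bS
  rw [key, key]
  exact bb_equiv _ _ (boundaryHom_translate x) _ _ (fin_sub hS)

lemma bS_biUnion (d q : ℕ) {I : Type} (T : Finset I) (S K : I → Set (ElemCube d))
    (hS : ∀ i, (S i).Finite) (hSK : ∀ i, S i ⊆ K i) (hK : ∀ i, FaceClosed (K i))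
    (hdis : ∀ i j, i ≠ j → Disjoint (K i) (K j)) :
    bS d q (⋃ i ∈ T, S i) = ∑ i ∈ T, bS d q (S i) := by
  classical
  induction T using Finset.induction_on with
  | empty => simp [bS_empty]
  | insert a T ha ih =>
    rw [Finset.sum_insert ha, ← ih, Finset.set_biUnion_insert]
    have key : ∀ k, {Q | cubeDim Q = k ∧ Q ∈ S a ∪ ⋃ i ∈ T, S i} =
      {Q | cubeDim Q = k ∧ Q ∈ S a} ∪ {Q | cubeDim Q = k ∧ Q ∈ ⋃ i ∈ T, S i} := by
      intro k
      ext Q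
      simp only [Set.mem_union, Set.mem_ofPred_eq]
      tauto
    have hfin : (⋃ i ∈ T, S i).Finite := T.finite_toSet.biUnion fun i _ => hS i
    unfold bS
    rw [key, key]
    have hsub : (⋃ i ∈ T, S i) ⊆ ⋃ i ∈ T, K i := Set.iUnion₂_mono fun i _ => hSK i
    refine bb_union _ (fin_sub (hS a)) (fin_sub (hS a)) (fin_sub hfin) (fin_sub hfin)
      (K := K a) (K' := ⋃ i ∈ T, K i) ?_ (fun Q hQ => hSK a hQ.2) (fun Q hQ => hSK a hQ.2)
      (fun Q hQ => hsub hQ.2) (fun Q hQ => hsub hQ.2)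
      (boundaryHom_supp (hK a)) (boundaryHom_supp ?_)
    · rw [Set.disjoint_iUnion₂_right]
      intro i hi
      exact hdis a i fun h => ha (h ▸ hi)
    · intro Q hQ R hR
      simp only [Set.mem_iUnion] at hQ ⊢
      obtain ⟨i, hi, hQ⟩ := hQ
      exact ⟨i, hi, hK i Q hQ R hR⟩

/-- combinatorial box -/
def inside {d : ℕ} (n : ℕ) (R : ElemCube d) : Prop :=
  ∀ i, -(n : ℤ) ≤ (R i).1 ∧ (R i).1 + blen (R i).2 ≤ n

def boxI (n : ℕ) : Finset (ℤ × Bool) :=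
  (Finset.Icc (-(n : ℤ)) n).image (fun l => (l, false)) ∪
    (Finset.Ico (-(n : ℤ)) n).image (fun l => (l, true))

lemma mem_boxI (n : ℕ) (p : ℤ × Bool) :
    p ∈ boxI n ↔ -(n : ℤ) ≤ p.1 ∧ p.1 + blen p.2 ≤ n := by
  obtain ⟨l, b⟩ := p
  cases b
  · simp [boxI, blen]
  · simp [boxI, blen]; try omega

lemma card_boxI (n : ℕ) : (boxI n).card = 4 * n + 1 := by
  unfold boxI
  rw [Finset.card_union_of_disjoint, Finset.card_image_of_injective, Finset.card_image_of_injective]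
  · simp; try omega
  · intro a b h; simpa using h
  · intro a b h; simpa using h
  · rw [Finset.disjoint_left]
    intro p h1 h2
    simp only [Finset.mem_image] at h1 h2
    obtain ⟨a, _, rfl⟩ := h1
    obtain ⟨b, _, h⟩ := h2
    simp at h

def box (d n : ℕ) : Finset (ElemCube d) := Fintype.piFinset fun _ => boxI n

lemma mem_box {d n : ℕ} (R : ElemCube d) : R ∈ box d n ↔ inside n R := by
  simp [box, Fintype.mem_piFinset, mem_boxI, inside]

lemma card_box (d n : ℕ) : (box d n).card = (4 * n + 1) ^ d := by
  simp [box, card_boxI]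

lemma blen_real (b : Bool) : ((if b then 1 else 0 : ℝ)) = (blen b : ℝ) := by
  cases b <;> simp [blen]

lemma mem_cubeSet {d : ℕ} (Q : ElemCube d) (x : Fin d → ℝ) :
    x ∈ cubeSet Q ↔ ∀ i, ((Q i).1 : ℝ) ≤ x i ∧ x i ≤ ((Q i).1 : ℝ) + (blen (Q i).2 : ℝ) := by
  simp only [cubeSet, Set.mem_ofPred_eq, Set.mem_Icc, blen_real]

lemma blen_nonneg (b : Bool) : 0 ≤ blen b := by cases b <;> simp [blen]

lemma cubeSet_subset_lambda {d n : ℕ} (R : ElemCube d) :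
    cubeSet R ⊆ lambda d n ↔ inside n R := by
  constructor
  · intro h i
    have hb : ∀ j, (0 : ℝ) ≤ blen (R j).2 := fun j => by exact_mod_cast blen_nonneg _
    have h1 := h ((mem_cubeSet R (fun j => ((R j).1 : ℝ))).2 fun j => ⟨le_rfl, by linarith [hb j]⟩) i
    have h2 := h ((mem_cubeSet R (fun j => ((R j).1 : ℝ) + blen (R j).2)).2
      fun j => ⟨by linarith [hb j], le_rfl⟩) i
    exact ⟨by exact_mod_cast h1.1, by exact_mod_cast h2.2⟩
  · intro h x hx i
    rw [mem_cubeSet] at hx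
    have h1 : (-(n : ℝ)) ≤ ((R i).1 : ℝ) := by exact_mod_cast (h i).1
    have h2 : ((R i).1 : ℝ) + blen (R i).2 ≤ n := by exact_mod_cast (h i).2
    exact ⟨h1.trans (hx i).1, (hx i).2.trans h2⟩

lemma cubeSet_subset_of_faceLE {d : ℕ} {R Q : ElemCube d} (h : faceLE R Q) :
    cubeSet R ⊆ cubeSet Q := by
  intro x hx
  rw [mem_cubeSet] at hx ⊢
  intro i
  have h1 : ((Q i).1 : ℝ) ≤ ((R i).1 : ℝ) := by exact_mod_cast (h i).1
  have h2 : ((R i).1 : ℝ) + blen (R i).2 ≤ ((Q i).1 : ℝ) + blen (Q i).2 := by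
    exact_mod_cast (h i).2
  exact ⟨h1.trans (hx i).1, (hx i).2.trans h2⟩

lemma faceLE_of_mid {d : ℕ} {R Q : ElemCube d}
    (h : (fun i => ((R i).1 : ℝ) + (blen (R i).2 : ℝ) / 2) ∈ cubeSet Q) : faceLE R Q := by
  rw [mem_cubeSet] at h
  intro i
  obtain ⟨h1, h2⟩ := h i
  have h1' : 2 * (Q i).1 ≤ 2 * (R i).1 + blen (R i).2 := by
    have : (2 : ℝ) * (Q i).1 ≤ 2 * (R i).1 + blen (R i).2 := by linarith
    exact_mod_cast this
  have h2' : 2 * (R i).1 + blen (R i).2 ≤ 2 * (Q i).1 + 2 * blen (Q i).2 := by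
    have : (2 : ℝ) * (R i).1 + blen (R i).2 ≤ 2 * (Q i).1 + 2 * blen (Q i).2 := by linarith
    exact_mod_cast this
  rcases blen_cases (R i).2 with ⟨_, h3⟩ | ⟨_, h3⟩ <;>
    rcases blen_cases (Q i).2 with ⟨_, h4⟩ | ⟨_, h4⟩ <;> omega

/-- active cubes -/
def act {d : ℕ} (ω : Config d) (t : ℝ) (R : ElemCube d) : Prop :=
  ∃ Q, faceLE R Q ∧ (ω Q : ℝ) ≤ t

lemma cubeSet_subset_cubSet {d : ℕ} (ω : Config d) (t : ℝ) (R : ElemCube d) :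
    cubeSet R ⊆ cubSet ω t ↔ act ω t R := by
  constructor
  · intro h
    have hm : (fun i => ((R i).1 : ℝ) + (blen (R i).2 : ℝ) / 2) ∈ cubeSet R := by
      rw [mem_cubeSet]
      intro i
      have : (0 : ℝ) ≤ blen (R i).2 := by exact_mod_cast blen_nonneg _
      constructor <;> linarith
    have := h hm
    simp only [cubSet, Set.mem_iUnion, Set.mem_ofPred_eq] at this
    obtain ⟨Q, hQ, hmQ⟩ := this
    exact ⟨Q, faceLE_of_mid hmQ, hQ⟩
  · rintro ⟨Q, hQ, hω⟩
    refine (cubeSet_subset_of_faceLE hQ).trans ?_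
    exact Set.subset_biUnion_of_mem (u := fun Q => cubeSet Q) (by exact hω)

def SS {d : ℕ} (n : ℕ) (t : ℝ) (ω : Config d) : Set (ElemCube d) := {R | act ω t R ∧ inside n R}

lemma bettiN_eq (d q n : ℕ) (t : ℝ) (ω : Config d) : bettiN d q n t ω = bS d q (SS n t ω) := by
  unfold bettiN SS
  rw [betti_eq]
  congr 1
  ext R
  simp only [Set.mem_ofPred_eq, Set.subset_inter_iff, cubeSet_subset_lambda, cubeSet_subset_cubSet]

lemma inside_finite (d n : ℕ) : {R : ElemCube d | inside n R}.Finite :=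
  (box d n).finite_toSet.subset fun R hR => (mem_box R).2 hR

lemma SS_finite {d : ℕ} (n : ℕ) (t : ℝ) (ω : Config d) : (SS n t ω).Finite :=
  (inside_finite d n).subset fun _ h => h.2

lemma measurable_bettiN (d q n : ℕ) (t : ℝ) : Measurable (bettiN d q n t) := by
  classical
  have h1 : bettiN d q n t = (fun p : (box d n → Prop) =>
      bS d q {R | ∃ h : R ∈ box d n, p ⟨R, h⟩}) ∘ (fun ω R => act ω t R.1) := by
    funext ω
    rw [bettiN_eq]
    simp only [Function.comp]
    congr 1
    ext R
    simp only [SS, Set.mem_ofPred_eq, mem_box]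
    constructor
    · rintro ⟨h, h'⟩; exact ⟨h', h⟩
    · rintro ⟨h, h'⟩; exact ⟨h', h⟩
  rw [h1]
  refine (measurable_of_finite _).comp (measurable_pi_iff.2 fun R => ?_)
  refine measurableSet_setOfPred.1 ?_
  simp only [act]
  rw [Set.ofPred_exists]
  refine MeasurableSet.iUnion fun Q => ?_
  by_cases hf : faceLE R.1 Q
  · simp only [hf, true_and]
    exact measurableSet_le (measurable_subtype_coe.comp (measurable_pi_apply Q)) measurable_const
  · simp [hf]

lemma bettiN_le (d q n : ℕ) (t : ℝ) (ω : Config d) :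
    bettiN d q n t ω ≤ 2 * (4 * n + 1) ^ d := by
  have := bS_lip d q (Set.empty_subset (SS n t ω)) (SS_finite n t ω) (box d n)
    (fun x hx _ => (mem_box x).2 hx.2)
  rw [bS_empty, card_box, ← bettiN_eq] at this
  have := le_of_abs_le this
  push_cast at this
  zify
  linarith

lemma integrable_bettiN (d q n : ℕ) (t : ℝ) (P : Measure (Config d)) [IsProbabilityMeasure P] :
    Integrable (fun ω => (bettiN d q n t ω : ℝ)) P := by
  refine Integrable.of_bound (C := 2 * (4 * n + 1) ^ d) ?_ (ae_of_all _ fun ω => ?_)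
  · exact (measurable_from_top.comp (measurable_bettiN d q n t)).aestronglyMeasurable
  · rw [Real.norm_of_nonneg (by positivity)]
    exact_mod_cast bettiN_le d q n t ω

end Geom

section Tile

def ctr {d : ℕ} (m : ℕ) (k : Fin d → ℤ) : Fin d → ℤ := fun i => (2 * m + 1) * k i

def KK {d : ℕ} (m : ℕ) (k : Fin d → ℤ) : Set (ElemCube d) :=
  {R | inside m (translateCube (-(ctr m k)) R)}

lemma mem_KK {d : ℕ} (m : ℕ) (k : Fin d → ℤ) (R : ElemCube d) :
    R ∈ KK m k ↔ ∀ i, -(m : ℤ) + ctr m k i ≤ (R i).1 ∧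
      (R i).1 + blen (R i).2 ≤ m + ctr m k i := by
  simp only [KK, inside, translateCube, Set.mem_ofPred_eq, Pi.neg_apply]
  refine forall_congr' fun i => ?_
  constructor <;> rintro ⟨h1, h2⟩ <;> constructor <;> linarith

lemma KK_closed {d : ℕ} (m : ℕ) (k : Fin d → ℤ) : FaceClosed (KK m k) := by
  intro Q hQ R hR
  rw [mem_KK] at hQ ⊢
  exact fun i => ⟨(hQ i).1.trans (hR i).1, (hR i).2.trans (hQ i).2⟩

lemma KK_disj {d : ℕ} (m : ℕ) (k l : Fin d → ℤ) (h : k ≠ l) : Disjoint (KK m k) (KK m l) := by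
  rw [Set.disjoint_left]
  intro R h1 h2
  rw [mem_KK] at h1 h2
  apply h
  funext i
  have a := h1 i
  have b := h2 i
  have c := blen_nonneg (R i).2
  unfold ctr at a b
  by_contra hne
  rcases lt_or_gt_of_ne hne with hlt | hlt
  · have : (2 * (m : ℤ) + 1) * (k i + 1) ≤ (2 * m + 1) * l i :=
      mul_le_mul_of_nonneg_left hlt (by positivity)
    linarith
  · have : (2 * (m : ℤ) + 1) * (l i + 1) ≤ (2 * m + 1) * k i :=
      mul_le_mul_of_nonneg_left hlt (by positivity)
    linarith

def TT (d N : ℕ) : Finset (Fin d → ℤ) := Fintype.piFinset fun _ => Finset.Icc (-(N : ℤ)) N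

lemma card_TT (d N : ℕ) : (TT d N).card = (2 * N + 1) ^ d := by
  simp only [TT, Fintype.card_piFinset_const, Int.card_Icc]
  congr 1
  omega

lemma KK_inside {d : ℕ} {m n N : ℕ} (hn : (2 * m + 1) * N + m ≤ n) {k : Fin d → ℤ}
    (hk : k ∈ TT d N) {R : ElemCube d} (hR : R ∈ KK m k) : inside n R := by
  rw [mem_KK] at hR
  intro i
  have h := hR i
  simp only [TT, Fintype.mem_piFinset, Finset.mem_Icc] at hk
  obtain ⟨h1, h2⟩ := hk i
  have hn' : (2 * (m : ℤ) + 1) * N + m ≤ n := by exact_mod_cast hn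
  have a1 : (2 * (m : ℤ) + 1) * (-N) ≤ (2 * m + 1) * k i :=
    mul_le_mul_of_nonneg_left h1 (by positivity)
  have a2 : (2 * (m : ℤ) + 1) * k i ≤ (2 * m + 1) * N :=
    mul_le_mul_of_nonneg_left h2 (by positivity)
  unfold ctr at h
  constructor <;> linarith

lemma act_translate {d : ℕ} (ω : Config d) (t : ℝ) (x : Fin d → ℤ) (R : ElemCube d) :
    act (configShift (-x) ω) t R ↔ act ω t (translateCube x R) := by
  have hf : ∀ y : Fin d → ℤ, ∀ R Q : ElemCube d, faceLE R Q →
      faceLE (translateCube y R) (translateCube y Q) := by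
    intro y R Q h i
    have := h i
    simp only [translateCube]
    constructor <;> linarith
  constructor
  · rintro ⟨Q, h, hQ⟩
    refine ⟨translateCube x Q, hf x _ _ h, ?_⟩
    simpa [configShift] using hQ
  · rintro ⟨Q, h, hQ⟩
    refine ⟨translateCube (-x) Q, ?_, ?_⟩
    · have := hf (-x) _ _ h
      rwa [show translateCube (-x) (translateCube x R) = R from (trEquiv x).left_inv R] at this
    · simp only [configShift, neg_neg]
      rwa [show translateCube x (translateCube (-x) Q) = Q from (trEquiv x).right_inv Q]

def SK {d : ℕ} (m : ℕ) (t : ℝ) (ω : Config d) (k : Fin d → ℤ) : Set (ElemCube d) :=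
  {R | act ω t R ∧ R ∈ KK m k}

lemma SK_eq {d : ℕ} (m : ℕ) (t : ℝ) (ω : Config d) (k : Fin d → ℤ) :
    SK m t ω k = trEquiv (ctr m k) '' SS m t (configShift (-(ctr m k)) ω) := by
  ext R
  constructor
  · rintro ⟨h1, h2⟩
    refine ⟨translateCube (-(ctr m k)) R, ⟨?_, h2⟩, (trEquiv (ctr m k)).right_inv R⟩
    rw [act_translate]
    rwa [show translateCube (ctr m k) (translateCube (-(ctr m k)) R) = R from
      (trEquiv (ctr m k)).right_inv R]
  · rintro ⟨R, ⟨h1, h2⟩, rfl⟩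
    refine ⟨(act_translate _ _ _ _).1 h1, ?_⟩
    change inside m (translateCube (-(ctr m k)) (translateCube (ctr m k) R))
    rwa [show translateCube (-(ctr m k)) (translateCube (ctr m k) R) = R from
      (trEquiv (ctr m k)).left_inv R]

lemma SK_finite {d : ℕ} (m : ℕ) (t : ℝ) (ω : Config d) (k : Fin d → ℤ) :
    (SK m t ω k).Finite := by
  rw [SK_eq]
  exact (SS_finite _ _ _).image _

lemma bS_SK (d q m : ℕ) (t : ℝ) (ω : Config d) (k : Fin d → ℤ) :
    bS d q (SK m t ω k) = bettiN d q m t (configShift (-(ctr m k)) ω) := by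
  rw [SK_eq, bS_translate _ _ _ (SS_finite _ _ _), bettiN_eq]

lemma tile_bound (d q : ℕ) {m n N : ℕ} (hn : (2 * m + 1) * N + m ≤ n) (t : ℝ) (ω : Config d) :
    |(bettiN d q n t ω : ℝ) - ∑ k ∈ TT d N, (bettiN d q m t (configShift (-(ctr m k)) ω) : ℝ)|
      ≤ 2 * ((4 * n + 1) ^ d - ((2 * N + 1) * (4 * m + 1)) ^ d) := by
  classical
  let G : Finset (ElemCube d) := (TT d N).biUnion fun k => (box d m).image (trEquiv (ctr m k))
  have hGk : ∀ k R, R ∈ (box d m).image (trEquiv (ctr m k)) ↔ R ∈ KK m k := by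
    intro k R
    rw [Finset.mem_image]
    constructor
    · rintro ⟨R, hR, rfl⟩
      change inside m (translateCube (-(ctr m k)) (translateCube (ctr m k) R))
      rw [show translateCube (-(ctr m k)) (translateCube (ctr m k) R) = R from
        (trEquiv (ctr m k)).left_inv R]
      exact (mem_box R).1 hR
    · intro h
      exact ⟨translateCube (-(ctr m k)) R, (mem_box _).2 h, (trEquiv (ctr m k)).right_inv R⟩
  have hGc : G.card = ((2 * N + 1) * (4 * m + 1)) ^ d := by
    rw [Finset.card_biUnion]
    · simp only [Finset.card_image_of_injective _ (Equiv.injective _), card_box,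
        Finset.sum_const, card_TT, smul_eq_mul, mul_pow]
    · intro k _ l _ hkl
      refine Finset.disjoint_left.2 fun R h1 h2 => ?_
      rw [hGk] at h1 h2
      exact Set.disjoint_left.1 (KK_disj m k l hkl) h1 h2
  have hGb : G ⊆ box d n := by
    intro R hR
    obtain ⟨k, hk, hR⟩ := Finset.mem_biUnion.1 hR
    exact (mem_box R).2 (KK_inside hn hk ((hGk k R).1 hR))
  have hle := Finset.card_le_card hGb
  have hFc := Finset.card_sdiff_of_subset hGb
  have hsub : (⋃ k ∈ TT d N, SK m t ω k) ⊆ SS n t ω := by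
    intro R hR
    simp only [Set.mem_iUnion] at hR
    obtain ⟨k, hk, h1, h2⟩ := hR
    exact ⟨h1, KK_inside hn hk h2⟩
  have h := bS_lip d q hsub (SS_finite n t ω) (box d n \ G) (by
    intro R hR hR'
    rw [Finset.mem_sdiff, mem_box]
    refine ⟨hR.2, fun hG => hR' ?_⟩
    obtain ⟨k, hk, hG⟩ := Finset.mem_biUnion.1 hG
    simp only [Set.mem_iUnion]
    exact ⟨k, hk, hR.1, (hGk k R).1 hG⟩)
  rw [bS_biUnion d q (TT d N) (SK m t ω) (KK m) (SK_finite m t ω) (fun k R hR => hR.2)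
    (KK_closed m) (KK_disj m), hFc, Nat.cast_sub hle, hGc, card_box, ← bettiN_eq] at h
  simp only [bS_SK] at h
  have h' : ((|(bettiN d q n t ω : ℤ) -
    ((∑ k ∈ TT d N, bettiN d q m t (configShift (-(ctr m k)) ω) : ℕ) : ℤ)| : ℤ) : ℝ) ≤
    ((2 * ((((4 * n + 1) ^ d : ℕ) : ℤ) - (((2 * N + 1) * (4 * m + 1)) ^ d : ℕ)) : ℤ) : ℝ) :=
    Int.cast_le.2 h
  push_cast at h'
  exact h'

lemma measurable_configShift {d : ℕ} (x : Fin d → ℤ) :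
    Measurable (configShift x : Config d → Config d) :=
  measurable_pi_iff.2 fun _ => measurable_pi_apply _

lemma shift_integral (d q m : ℕ) (t : ℝ) (P : Measure (Config d)) (hstat : Stationary P)
    (x : Fin d → ℤ) :
    ∫ ω, (bettiN d q m t (configShift x ω) : ℝ) ∂P = ∫ ω, (bettiN d q m t ω : ℝ) ∂P := by
  have hmp : MeasurePreserving (configShift x) P P := by
    refine ⟨measurable_configShift x, ?_⟩
    ext A hA
    rw [Measure.map_apply (measurable_configShift x) hA]
    exact hstat x A hA
  have hm : AEStronglyMeasurable (fun ω => (bettiN d q m t ω : ℝ)) P :=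
    (measurable_from_top.comp (measurable_bettiN d q m t)).aestronglyMeasurable
  conv_rhs => rw [← hmp.map_eq]
  rw [integral_map (measurable_configShift x).aemeasurable (by rw [hmp.map_eq]; exact hm)]

lemma shift_integrable (d q m : ℕ) (t : ℝ) (P : Measure (Config d)) [IsProbabilityMeasure P]
    (x : Fin d → ℤ) :
    Integrable (fun ω => (bettiN d q m t (configShift x ω) : ℝ)) P := by
  refine Integrable.of_bound (C := 2 * (4 * m + 1) ^ d) ?_ (ae_of_all _ fun ω => ?_)
  · exact (measurable_from_top.comp
      ((measurable_bettiN d q m t).comp (measurable_configShift x))).aestronglyMeasurable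
  · rw [Real.norm_of_nonneg (by positivity)]
    exact_mod_cast bettiN_le d q m t _

lemma expect_bound (d q : ℕ) {m n N : ℕ} (hn : (2 * m + 1) * N + m ≤ n) (t : ℝ)
    (P : Measure (Config d)) [IsProbabilityMeasure P] (hstat : Stationary P) :
    |∫ ω, (bettiN d q n t ω : ℝ) ∂P - (2 * N + 1) ^ d * ∫ ω, (bettiN d q m t ω : ℝ) ∂P|
      ≤ 2 * ((4 * n + 1) ^ d - ((2 * N + 1) * (4 * m + 1)) ^ d) := by
  have e : ∫ ω, ((bettiN d q n t ω : ℝ) -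
      ∑ k ∈ TT d N, (bettiN d q m t (configShift (-(ctr m k)) ω) : ℝ)) ∂P =
      ∫ ω, (bettiN d q n t ω : ℝ) ∂P - (2 * N + 1) ^ d * ∫ ω, (bettiN d q m t ω : ℝ) ∂P := by
    rw [integral_sub (integrable_bettiN d q n t P)
      (integrable_finsetSum _ fun k _ => shift_integrable d q m t P _),
      integral_finsetSum _ fun k _ => shift_integrable d q m t P _]
    simp only [shift_integral d q m t P hstat, Finset.sum_const, card_TT, nsmul_eq_mul]
    push_cast
    rfl
  rw [← e, ← Real.norm_eq_abs]
  have := norm_integral_le_of_norm_le_const (μ := P) (f := fun ω => (bettiN d q n t ω : ℝ) -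
      ∑ k ∈ TT d N, (bettiN d q m t (configShift (-(ctr m k)) ω) : ℝ))
      (C := 2 * ((4 * n + 1) ^ d - ((2 * N + 1) * (4 * m + 1)) ^ d)) (ae_of_all P fun ω => by
    rw [Real.norm_eq_abs]; exact tile_bound d q hn t ω)
  simpa using this

lemma expect_le (d q n : ℕ) (t : ℝ) (P : Measure (Config d)) [IsProbabilityMeasure P] :
    ∫ ω, (bettiN d q n t ω : ℝ) ∂P ≤ 2 * (4 * n + 1) ^ d := by
  have := integral_mono (integrable_bettiN d q n t P) (integrable_const (2 * (4 * (n : ℝ) + 1) ^ d))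
    (fun ω => by
      have h : ((bettiN d q n t ω : ℕ) : ℝ) ≤ ((2 * (4 * n + 1) ^ d : ℕ) : ℝ) :=
        Nat.cast_le.2 (bettiN_le d q n t ω)
      push_cast at h
      exact h)
  simpa using this

end Tile

section Analysis

def uu (m n : ℕ) : ℝ := (2 * (((n - m) / (2 * m + 1) : ℕ) : ℝ) + 1) / (2 * n)

lemma uu_tendsto (m : ℕ) : Tendsto (uu m) atTop (𝓝 (1 / (2 * m + 1))) := by
  have hinv : Tendsto (fun n : ℕ => ((n : ℝ))⁻¹) atTop (𝓝 0) := tendsto_inv_atTop_nhds_zero_nat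
  have l1 : Tendsto (fun n : ℕ => (1 - (4 * m + 1) / 2 * ((n : ℝ))⁻¹) / (2 * (m : ℝ) + 1)) atTop
      (𝓝 (1 / (2 * m + 1))) := by
    have := ((hinv.const_mul ((4 * (m : ℝ) + 1) / 2)).const_sub 1).div_const (2 * (m : ℝ) + 1)
    simpa using this
  have l2 : Tendsto (fun n : ℕ => (1 + 1 / 2 * ((n : ℝ))⁻¹) / (2 * (m : ℝ) + 1)) atTop
      (𝓝 (1 / (2 * m + 1))) := by
    have := ((hinv.const_mul (1 / 2 : ℝ)).const_add 1).div_const (2 * (m : ℝ) + 1)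
    simpa using this
  refine tendsto_of_tendsto_of_tendsto_of_le_of_le' l1 l2 ?_ ?_
  · filter_upwards [eventually_ge_atTop (m + 1)] with n hn
    have hn0 : (0 : ℝ) < n := by exact_mod_cast (by omega : 0 < n)
    have h := Nat.lt_div_mul_add (a := n - m) (b := 2 * m + 1) (by omega)
    have h' : n < (n - m) / (2 * m + 1) * (2 * m + 1) + (2 * m + 1) + m := by omega
    have h'' : (n : ℝ) < (((n - m) / (2 * m + 1) : ℕ) : ℝ) * (2 * m + 1) + (2 * m + 1) + m := by
      exact_mod_cast h'
    unfold uu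
    rw [div_le_div_iff₀ (by positivity) (by positivity)]
    have : (1 - (4 * (m : ℝ) + 1) / 2 * (n : ℝ)⁻¹) * (2 * n) = 2 * n - (4 * m + 1) := by
      field_simp
    rw [this]
    nlinarith
  · filter_upwards [eventually_ge_atTop (m + 1)] with n hn
    have hn0 : (0 : ℝ) < n := by exact_mod_cast (by omega : 0 < n)
    have h := Nat.div_mul_le_self (n - m) (2 * m + 1)
    have h' : (n - m) / (2 * m + 1) * (2 * m + 1) + m ≤ n := by omega
    have h'' : (((n - m) / (2 * m + 1) : ℕ) : ℝ) * (2 * m + 1) + m ≤ n := by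
      exact_mod_cast h'
    unfold uu
    rw [div_le_div_iff₀ (by positivity) (by positivity)]
    have : (1 + 1 / 2 * (n : ℝ)⁻¹) * (2 * n) = 2 * n + 1 := by
      field_simp
    rw [this]
    nlinarith

def gg (d q : ℕ) (P : Measure (Config d)) (n : ℕ) (t : ℝ) : ℝ :=
  ((2 * (n : ℝ)) ^ d)⁻¹ * ∫ ω, (bettiN d q n t ω : ℝ) ∂P

def err (d m n : ℕ) : ℝ :=
  2 * (((4 * n + 1) / (2 * n)) ^ d - ((4 * m + 1) * uu m n) ^ d) +
    |(2 * m * uu m n) ^ d - 1| * (2 * 3 ^ d)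

lemma gg_le (d q : ℕ) (P : Measure (Config d)) [IsProbabilityMeasure P] (m : ℕ) (hm : 1 ≤ m)
    (t : ℝ) : gg d q P m t ≤ 2 * 3 ^ d := by
  have hm' : (1 : ℝ) ≤ m := by exact_mod_cast hm
  have h := expect_le d q m t P
  unfold gg
  rw [inv_mul_le_iff₀ (by positivity)]
  refine h.trans ?_
  have : (4 * (m : ℝ) + 1) ^ d ≤ (2 * m * 3) ^ d :=
    pow_le_pow_left₀ (by positivity) (by linarith) d
  rw [mul_pow] at this
  linarith

lemma gg_nonneg (d q : ℕ) (P : Measure (Config d)) (m : ℕ) (t : ℝ) : 0 ≤ gg d q P m t :=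
  mul_nonneg (by positivity) (integral_nonneg fun _ => by positivity)

lemma gg_bound (d q : ℕ) (P : Measure (Config d)) [IsProbabilityMeasure P] (hstat : Stationary P)
    (m n : ℕ) (hm : 1 ≤ m) (hmn : m ≤ n) (t : ℝ) :
    |gg d q P n t - gg d q P m t| ≤ err d m n := by
  have hm' : (0 : ℝ) < m := by exact_mod_cast hm
  have hn' : (0 : ℝ) < n := by exact_mod_cast (by omega : 0 < n)
  have h := Nat.div_mul_le_self (n - m) (2 * m + 1)
  rw [mul_comm] at h
  have hb := expect_bound d q (m := m) (n := n) (N := (n - m) / (2 * m + 1)) (by omega) t P hstat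
  set N := (n - m) / (2 * m + 1) with hN
  set an := ∫ ω, (bettiN d q n t ω : ℝ) ∂P with han
  set am := ∫ ω, (bettiN d q m t ω : ℝ) ∂P with ham
  have hu : uu m n = (2 * N + 1) / (2 * n) := rfl
  have h1 : |gg d q P n t - (2 * m * uu m n) ^ d * gg d q P m t| ≤
      2 * (((4 * n + 1) / (2 * n)) ^ d - ((4 * m + 1) * uu m n) ^ d) := by
    have e1 : gg d q P n t - (2 * m * uu m n) ^ d * gg d q P m t =
        ((2 * (n : ℝ)) ^ d)⁻¹ * (an - (2 * N + 1) ^ d * am) := by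
      unfold gg
      rw [← han, ← ham, hu, mul_pow (2 * (m : ℝ)), div_pow]
      have : (2 * (m : ℝ)) ^ d ≠ 0 := by positivity
      field_simp
    have e2 : 2 * (((4 * (n : ℝ) + 1) / (2 * n)) ^ d - ((4 * m + 1) * uu m n) ^ d) =
        ((2 * (n : ℝ)) ^ d)⁻¹ * (2 * ((4 * n + 1) ^ d - ((2 * N + 1) * (4 * m + 1)) ^ d)) := by
      rw [hu, mul_pow, mul_pow, div_pow, div_pow]
      field_simp
      simp only [mul_pow]
      ring
    rw [e1, e2, abs_mul, abs_of_pos (by positivity)]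
    exact mul_le_mul_of_nonneg_left hb (by positivity)
  have h2 : |(2 * m * uu m n) ^ d * gg d q P m t - gg d q P m t| ≤
      |(2 * m * uu m n) ^ d - 1| * (2 * 3 ^ d) := by
    rw [show (2 * m * uu m n) ^ d * gg d q P m t - gg d q P m t =
      ((2 * m * uu m n) ^ d - 1) * gg d q P m t by ring, abs_mul]
    refine mul_le_mul_of_nonneg_left ?_ (abs_nonneg _)
    rw [abs_of_nonneg (gg_nonneg d q P m t)]
    exact gg_le d q P m hm t
  unfold err
  exact (abs_sub_le _ _ _).trans (add_le_add h1 h2)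

def lerr (d m : ℕ) : ℝ :=
  2 * (2 ^ d - ((4 * m + 1) * (1 / (2 * m + 1))) ^ d) +
    |(2 * m * (1 / (2 * (m : ℝ) + 1))) ^ d - 1| * (2 * 3 ^ d)

lemma err_tendsto (d m : ℕ) : Tendsto (err d m) atTop (𝓝 (lerr d m)) := by
  have hu := uu_tendsto m
  have h4 : Tendsto (fun n : ℕ => (4 * (n : ℝ) + 1) / (2 * n)) atTop (𝓝 2) := by
    have hinv : Tendsto (fun n : ℕ => ((n : ℝ))⁻¹) atTop (𝓝 0) := tendsto_inv_atTop_nhds_zero_nat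
    have : Tendsto (fun n : ℕ => 2 + 1 / 2 * ((n : ℝ))⁻¹) atTop (𝓝 2) := by
      simpa using (hinv.const_mul (1 / 2 : ℝ)).const_add 2
    refine this.congr' ?_
    filter_upwards [eventually_ge_atTop 1] with n hn
    have hn0 : (0 : ℝ) < n := by exact_mod_cast hn
    field_simp
    ring
  unfold err lerr
  exact (((h4.pow d).sub ((hu.const_mul _).pow d)).const_mul 2).add
    (((((hu.const_mul _).pow d).sub_const 1).abs).mul_const _)

lemma lerr_tendsto (d : ℕ) : Tendsto (lerr d) atTop (𝓝 0) := by
  have h0 : Tendsto (fun m : ℕ => 1 / (2 * (m : ℝ) + 1)) atTop (𝓝 0) := by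
    have h2 : Tendsto (fun m : ℕ => 2 * (m : ℝ) + 1) atTop atTop :=
      tendsto_atTop_add_const_right _ _
        (tendsto_natCast_atTop_atTop.const_mul_atTop (by norm_num))
    simp only [one_div]
    exact h2.inv_tendsto_atTop
  have h1 : Tendsto (fun m : ℕ => (4 * (m : ℝ) + 1) * (1 / (2 * (m : ℝ) + 1))) atTop (𝓝 2) := by
    have : Tendsto (fun m : ℕ => 2 - 1 / (2 * (m : ℝ) + 1)) atTop (𝓝 2) := by
      simpa using h0.const_sub 2
    refine this.congr fun m => ?_
    have : (2 * (m : ℝ) + 1) ≠ 0 := by positivity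
    field_simp
    ring
  have h2 : Tendsto (fun m : ℕ => (2 * (m : ℝ)) * (1 / (2 * (m : ℝ) + 1))) atTop (𝓝 1) := by
    have : Tendsto (fun m : ℕ => 1 - 1 / (2 * (m : ℝ) + 1)) atTop (𝓝 1) := by
      simpa using h0.const_sub 1
    refine this.congr fun m => ?_
    have : (2 * (m : ℝ) + 1) ≠ 0 := by positivity
    field_simp
    ring
  have := (((h1.pow d).const_sub (2 ^ d)).const_mul 2).add
    ((((h2.pow d).sub_const 1).abs).mul_const (2 * 3 ^ d))
  unfold lerr
  simpa using this

lemma gg_cauchy (d q : ℕ) (P : Measure (Config d)) [IsProbabilityMeasure P]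
    (hstat : Stationary P) (ε : ℝ) (hε : 0 < ε) :
    ∃ m N : ℕ, ∀ n ≥ N, ∀ t, |gg d q P n t - gg d q P m t| ≤ ε := by
  obtain ⟨m, hm1, hm⟩ :=
    ((eventually_ge_atTop 1).and ((lerr_tendsto d).eventually (gt_mem_nhds hε))).exists
  obtain ⟨N, hN⟩ := eventually_atTop.1
    ((eventually_ge_atTop m).and ((err_tendsto d m).eventually (gt_mem_nhds hm)))
  exact ⟨m, N, fun n hn t =>
    (gg_bound d q P hstat m n hm1 (hN n hn).1 t).trans (hN n hn).2.le⟩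

lemma gg_unif (d q : ℕ) (P : Measure (Config d)) [IsProbabilityMeasure P]
    (hstat : Stationary P) (s : Set ℝ) :
    TendstoUniformlyOn (gg d q P) (fun t => limsup (fun n => gg d q P n t) atTop) atTop s := by
  have hc : ∀ t, CauchySeq fun n => gg d q P n t := by
    intro t
    rw [Metric.cauchySeq_iff']
    intro ε hε
    obtain ⟨m, N, h⟩ := gg_cauchy d q P hstat (ε / 3) (by linarith)
    refine ⟨N, fun n hn => ?_⟩
    rw [Real.dist_eq]
    have h1 := h n hn t
    have h2 := h N le_rfl t
    rw [abs_sub_comm] at h2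
    have := abs_sub_le (gg d q P n t) (gg d q P m t) (gg d q P N t)
    linarith
  have hu : UniformCauchySeqOn (gg d q P) atTop s := by
    rw [Metric.uniformCauchySeqOn_iff]
    intro ε hε
    obtain ⟨m, N, h⟩ := gg_cauchy d q P hstat (ε / 3) (by linarith)
    refine ⟨N, fun n hn k hk t _ => ?_⟩
    rw [Real.dist_eq]
    have h1 := h n hn t
    have h2 := h k hk t
    rw [abs_sub_comm] at h2
    have := abs_sub_le (gg d q P n t) (gg d q P m t) (gg d q P k t)
    linarith
  refine hu.tendstoUniformlyOn_of_tendsto fun t _ => ?_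
  obtain ⟨l, hl⟩ := cauchySeq_tendsto_of_complete (hc t)
  rw [hl.limsup_eq]
  exact hl

end Analysis

/-- Fix `0 ≤ q < d` and let `P` be a stationary and ergodic probability
measure on `Ω = [0,1]^{K^d}` whose marginal distribution functions
`F^Q(t) = P(ω_Q ≤ t)` are continuous on `[0,1]` for every elementary cube `Q`. Then the
functions `t ↦ |Λ_n|⁻¹ E[β_q^n(t)]` converge uniformly on `[0,1]` to
`β̂_q(t) = limsup_{n→∞} |Λ_n|⁻¹ E[β_q^n(t)]`. -/
theorem uniform_convergence_expected_betti (d q : ℕ) (hq : q < d)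
    (P : Measure (Config d)) [IsProbabilityMeasure P]
    (hstat : Stationary P) (herg : ErgodicConfig P)
    (hcont : ∀ Q : ElemCube d,
      ContinuousOn (fun t : ℝ => (P {ω : Config d | (ω Q : ℝ) ≤ t}).toReal)
        (Set.Icc (0 : ℝ) 1)) :
    TendstoUniformlyOn
      (fun (n : ℕ) (t : ℝ) => ((2 * (n : ℝ)) ^ d)⁻¹ * ∫ ω, (bettiN d q n t ω : ℝ) ∂P)
      (fun t => betaHat d q P t) atTop (Set.Icc (0 : ℝ) 1) := by
  exact gg_unif d q P hstat _

end
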